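/- Let U ⊆ ℝⁿ be open, let g^{ij} : U → ℝ be smooth functions such that (g^{ij}(x)) is a symmetric invertible matrix for each x, with inverse matrix (g_{ij}(x)), and let Γ^i{}_{jk} := (1/2) Σ_m g^{im}( ∂_j g_{mk} + ∂_k g_{mj} − ∂_m g_{jk} ) be the associated Christoffel symbols. Let σ : U × U → ℝ be a smooth symmetric function (σ(x,x') = σ(x',x)) satisfying the Hamilton–Jacobi equation σ(x,x') = (1/2) Σ_{i,j} g^{ij}(x) σ_{,i}(x,x') σ_{,j}(x,x') on U × U, together with σ(x,x) = 0 and σ_{,i}(x,x) = 0 for all x ∈ U, and assume the diagonal Hessian ([σ_{,ij}](x)) is invertible for every x ∈ U. Then the coincidence limit of the fourth partial derivatives in the first argument is [σ_{,ijkl}](x') = 4 g_{m(l} Γ^m{}_{ij,k)} + 4 g_{m(l} Γ^n{}_{ij} Γ^m{}_{k)n} + 3 g_{nm} Γ^n{}_{(ij} Γ^m{}_{kl)}, where Γ^m{}_{ij,k} = ∂_k Γ^m{}_{ij}, repeated indices m, n are summed, and round brackets denote symmetrization (average over all permutations) of the four free indices i, j, k, l in each term. -/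

import Mathlib

/-!
Fix `x'` and let `V^c = g^{cb} ∂_b σ` be the gradient of `σ(·, x')`. Differentiating the
Hamilton–Jacobi equation covariantly gives `V^b ∇_b V^c = V^c`, a geodesic equation, from which the
Taylor coefficients of `V` at `x'` can be read off. At first order the Jacobian of `V` is
idempotent, and since the Hessian is invertible it is the identity. At second order
`∂_i ∂_j V^c = -Γ^c_{ij}`, so that `∇V` has vanishing first derivatives; at third order the cyclic
sum of `∂_i ∂_j ∇_k V^c` vanishes, which determines `∂_i ∂_j ∂_k V^c`. Substituting this in
`∂_l σ = g_{lc} V^c` expresses `3 [σ_{,ijkl}]` as a cyclic sum of the claimed expression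
plus a multiple of `∂_i ∂_j g_{kl} - 2 ∂_k Γ_{lij}`, whose symmetrization is zero.

The computation only uses that partial derivatives are commuting derivations, so it takes place in
an arbitrary commutative algebra `R` over a field `K`, a point being a `K`-algebra map `R → K`.
-/

open scoped BigOperators
open Set

/-- `∂/∂x^i` in the first argument of a two-point function. -/
noncomputable def d1 (n : ℕ) (i : Fin n) (f : (Fin n → ℝ) → (Fin n → ℝ) → ℝ) :
    (Fin n → ℝ) → (Fin n → ℝ) → ℝ :=
  fun x x' => fderiv ℝ (fun y => f y x') x (Pi.single i 1)

/-- `∂/∂x'^i` in the second argument of a two-point function. -/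
noncomputable def d2 (n : ℕ) (i : Fin n) (f : (Fin n → ℝ) → (Fin n → ℝ) → ℝ) :
    (Fin n → ℝ) → (Fin n → ℝ) → ℝ :=
  fun x x' => fderiv ℝ (fun y => f x y) x' (Pi.single i 1)

/-- The matrix of mixed second derivatives `σ_{,ij'} = ∂²σ/∂x^i∂x'^j` at `(x,x')`. -/
noncomputable def mixedHess (n : ℕ) (σ : (Fin n → ℝ) → (Fin n → ℝ) → ℝ)
    (x x' : Fin n → ℝ) : Matrix (Fin n) (Fin n) ℝ :=
  Matrix.of fun i j => d1 n i (d2 n j σ) x x'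

/-- The pointwise matrix `(g^{ij}(x))` of a metric-coefficient field. -/
noncomputable def gMat (n : ℕ) (g : Fin n → Fin n → (Fin n → ℝ) → ℝ)
    (x : Fin n → ℝ) : Matrix (Fin n) (Fin n) ℝ :=
  Matrix.of fun i j => g i j x

/-- The lowered metric `g_{ij}(x)`, the pointwise inverse of `(g^{ij}(x))`. -/
noncomputable def gLow (n : ℕ) (g : Fin n → Fin n → (Fin n → ℝ) → ℝ)
    (x : Fin n → ℝ) : Matrix (Fin n) (Fin n) ℝ :=
  (gMat n g x)⁻¹

/-- The partial derivative `∂_i f` of a function on `ℝⁿ`. -/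
noncomputable def pd (n : ℕ) (i : Fin n) (f : (Fin n → ℝ) → ℝ) : (Fin n → ℝ) → ℝ :=
  fun y => fderiv ℝ f y (Pi.single i 1)

/-- The Christoffel symbols
`Γ^i_{jk} = ½ g^{im}(∂_j g_{mk} + ∂_k g_{mj} − ∂_m g_{jk})`. -/
noncomputable def christoffel (n : ℕ) (g : Fin n → Fin n → (Fin n → ℝ) → ℝ)
    (i j k : Fin n) (x : Fin n → ℝ) : ℝ :=
  (1 / 2) * ∑ m, g i m x *
    (pd n j (fun y => gLow n g y m k) x + pd n k (fun y => gLow n g y m j) x -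
      pd n m (fun y => gLow n g y j k) x)

/-- The unsymmetrized expression
`4 g_{ml} Γ^m_{ij,k} + 4 g_{ml} Γ^p_{ij} Γ^m_{kp} + 3 g_{pm} Γ^p_{ij} Γ^m_{kl}` at `x'`. -/
noncomputable def sigma4Term (n : ℕ) (g : Fin n → Fin n → (Fin n → ℝ) → ℝ)
    (x' : Fin n → ℝ) (i j k l : Fin n) : ℝ :=
  4 * (∑ m, gLow n g x' m l * pd n k (christoffel n g m i j) x') +
  4 * (∑ m, ∑ p, gLow n g x' m l * christoffel n g p i j x' * christoffel n g m k p x') +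
  3 * (∑ m, ∑ p, gLow n g x' p m * christoffel n g p i j x' * christoffel n g m k l x')

/-! ### Symmetrization over index permutations -/

section Symmetrization

/-- The sum of `F` over the three cyclic rotations of its arguments. -/
def cyclicSum {ι M : Type*} [Add M] (F : ι → ι → ι → M) (i j k : ι) : M :=
  F i j k + F j k i + F k i j

variable {ι κ K : Type*} [Fintype κ] [DecidableEq κ] [Field K]

/-- The symmetrization `F_{(i₁…iₘ)}` of an array of numbers over all permutations of its indices,
the multi-index being a function on the type `κ` of slots. -/
def symmetrize : ((κ → ι) → K) →ₗ[K] (κ → ι) → K where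
  toFun F y := ((Fintype.card κ).factorial : K)⁻¹ * ∑ τ : Equiv.Perm κ, F (y ∘ τ)
  map_add' F H := by ext y; simp [Finset.sum_add_distrib, mul_add]
  map_smul' c F := by ext y; simp [← Finset.mul_sum, mul_left_comm]

theorem symmetrize_apply (F : (κ → ι) → K) (y : κ → ι) :
    symmetrize F y = ((Fintype.card κ).factorial : K)⁻¹ * ∑ τ : Equiv.Perm κ, F (y ∘ τ) := rfl

theorem symmetrize_comp_perm (F : (κ → ι) → K) (ρ : Equiv.Perm κ) :
    symmetrize (fun y => F (y ∘ ρ)) = symmetrize F := by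
  ext y
  exact congrArg _ (Equiv.sum_comp (Equiv.mulRight ρ) fun τ : Equiv.Perm κ => F (y ∘ τ))

theorem symmetrize_comp_of_injective (F : (κ → ι) → K) {r : κ → κ} (hr : r.Injective) :
    symmetrize (fun y => F (y ∘ r)) = symmetrize F :=
  symmetrize_comp_perm F (Equiv.ofBijective r (Finite.injective_iff_bijective.1 hr))

theorem symmetrize_eq_self [CharZero K] {F : (κ → ι) → K}
    (hF : ∀ y (τ : Equiv.Perm κ), F (y ∘ τ) = F y) : symmetrize F = F := by
  ext y
  have h : ((Fintype.card κ).factorial : K) ≠ 0 := Nat.cast_ne_zero.2 (Nat.factorial_ne_zero _)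
  simp [symmetrize_apply, hF, Fintype.card_perm, h]

theorem symmetrize_foldr_ofFn [CharZero K] {α : Type*} (T : ι → α → α) [LeftCommutative T]
    (φ : α → K) (a : α) {m : ℕ} : symmetrize (fun y : Fin m → ι => φ ((List.ofFn y).foldr T a)) =
      fun y => φ ((List.ofFn y).foldr T a) :=
  symmetrize_eq_self fun y τ => congrArg φ ((Equiv.Perm.ofFn_comp_perm τ y).foldr_eq a)

theorem symmetrize_cyclicSum (F : ι → ι → ι → ι → K) :
    symmetrize (fun y : Fin 4 → ι => cyclicSum (fun i j k => F i j k (y 3)) (y 0) (y 1) (y 2)) =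
      (3 : K) • symmetrize fun y : Fin 4 → ι => F (y 0) (y 1) (y 2) (y 3) := by
  let F' : (Fin 4 → ι) → K := fun y => F (y 0) (y 1) (y 2) (y 3)
  have h₁ : symmetrize (fun y => F' (y ∘ ![1, 2, 0, 3])) = symmetrize F' :=
    symmetrize_comp_of_injective F' (by decide)
  have h₂ : symmetrize (fun y => F' (y ∘ ![2, 0, 1, 3])) = symmetrize F' :=
    symmetrize_comp_of_injective F' (by decide)
  calc symmetrize (F' + (fun y => F' (y ∘ ![1, 2, 0, 3])) + fun y => F' (y ∘ ![2, 0, 1, 3]))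
    _ = (3 : K) • symmetrize F' := by rw [map_add, map_add, h₁, h₂]; module

end Symmetrization

/-! ### Metrics and Hamilton–Jacobi functions in algebras with commuting derivations -/

noncomputable section

namespace AlgebraicMetric

open Matrix

section Jets

variable {ι K R : Type*} [Fintype ι] [CommRing K] [CommRing R] [Algebra K R]
  (D : ι → Derivation K R R) (ev : R →ₐ[K] K) {V : ι → R}

theorem eval_deriv_sum_mul (hV : ∀ b, ev (V b) = 0) (f : ι → R) (i : ι) :
    ev (D i (∑ b, V b * f b)) = ∑ b, ev (D i (V b)) * ev (f b) := by
  simp [hV, mul_comm]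

variable [DecidableEq ι]

theorem eval_deriv_deriv_sum_mul (hV : ∀ b, ev (V b) = 0)
    (hDV : ∀ i b, ev (D i (V b)) = (1 : Matrix ι ι K) i b) (f : ι → R) (i j : ι) :
    ev (D i (D j (∑ b, V b * f b))) =
      ∑ b, ev (D i (D j (V b))) * ev (f b) + ev (D i (f j)) + ev (D j (f i)) := by
  simp only [map_sum, Derivation.leibniz, smul_eq_mul, Finset.sum_add_distrib, map_add, mul_comm,
    map_mul, hV, zero_mul, Finset.sum_const_zero, hDV, one_apply, ite_mul, one_mul,
    Finset.sum_ite_eq, Finset.mem_univ, ↓reduceIte, zero_add]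
  ring

theorem eval_deriv_deriv_deriv_sum_mul (hD : ∀ i j f, D i (D j f) = D j (D i f))
    (hV : ∀ b, ev (V b) = 0)
    (hDV : ∀ i b, ev (D i (V b)) = (1 : Matrix ι ι K) i b) (f : ι → R) (i j k : ι) :
    ev (D i (D j (D k (∑ b, V b * f b)))) = ∑ b, ev (D i (D j (D k (V b)))) * ev (f b) +
      cyclicSum (fun i j k => ∑ b, ev (D i (D j (V b))) * ev (D k (f b)) + ev (D i (D j (f k))))
        i j k := by
  simp only [map_sum, Derivation.leibniz, smul_eq_mul, Finset.sum_add_distrib, map_add, mul_comm,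
    map_mul, hV, zero_mul, Finset.sum_const_zero, hDV, one_apply, ite_mul, one_mul,
    Finset.sum_ite_eq, Finset.mem_univ, ↓reduceIte, zero_add, cyclicSum, hD k i]
  ring

end Jets

variable {ι K R : Type*} [Fintype ι] [Field K] [CommRing R] [Algebra K R]
  (D : ι → Derivation K R R)

section Tensors

variable (g : Matrix ι ι R)

/-- The gradient vector field `V^a = g^{ab} ∂_b s`. Here, as below, `g` is the matrix `(g^{ij})`
with upper indices, so that `(g_{ij})` is `g⁻¹`. -/
def gradient (s : R) (a : ι) : R := ∑ b, g a b * D b s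

variable [DecidableEq ι]

/-- The Christoffel symbols of the first kind,
`Γ_{kij} = ½ (∂_i g_{kj} + ∂_j g_{ki} - ∂_k g_{ij})`. -/
def christoffelFirst (k i j : ι) : R :=
  (1 / 2 : K) • (D i (g⁻¹ k j) + D j (g⁻¹ k i) - D k (g⁻¹ i j))

/-- The Christoffel symbols `Γ^m_{ij} = g^{mk} Γ_{kij}` (of the second kind). -/
def christoffelSymbol (m i j : ι) : R := ∑ k, g m k * christoffelFirst D g k i j

/-- The covariant derivative `∇_b V^c = ∂_b V^c + Γ^c_{ba} V^a` of a vector field. -/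
def covDeriv (V : ι → R) (b c : ι) : R := D b (V c) + ∑ a, christoffelSymbol D g c b a * V a

/-- The covariant Hessian `∇_i ∇_j s = ∂_i ∂_j s - Γ^m_{ij} ∂_m s`. -/
def hessian (s : R) (i j : ι) : R := D i (D j s) - ∑ m, christoffelSymbol D g m i j * D m s

variable {D g}

theorem christoffelFirst_comm (hg : g.IsSymm) (k i j : ι) :
    christoffelFirst D g k i j = christoffelFirst D g k j i := by
  rw [christoffelFirst, christoffelFirst, hg.inv.apply i j, add_comm (D i _)]

theorem christoffelSymbol_comm (hg : g.IsSymm) (m i j : ι) :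
    christoffelSymbol D g m i j = christoffelSymbol D g m j i := by
  simp only [christoffelSymbol, christoffelFirst_comm hg _ i j]

theorem sum_inv_mul_christoffelSymbol (hdet : IsUnit g.det) (k i j : ι) :
    ∑ m, g⁻¹ k m * christoffelSymbol D g m i j = christoffelFirst D g k i j := by
  change (g⁻¹ *ᵥ g *ᵥ fun k => christoffelFirst D g k i j) k = _
  rw [mulVec_mulVec, nonsing_inv_mul g hdet, one_mulVec]

theorem sum_inv_mul_gradient (hdet : IsUnit g.det) (s : R) (k : ι) :
    ∑ a, g⁻¹ k a * gradient D g s a = D k s := by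
  change (g⁻¹ *ᵥ g *ᵥ fun b => D b s) k = _
  rw [mulVec_mulVec, nonsing_inv_mul g hdet, one_mulVec]

theorem deriv_inv [CharZero K] (hg : g.IsSymm) (i j k : ι) :
    D i (g⁻¹ j k) = christoffelFirst D g j i k + christoffelFirst D g k i j := by
  rw [christoffelFirst, christoffelFirst, hg.inv.apply j k, hg.inv.apply i k, hg.inv.apply i j]
  module

theorem sum_christoffelSymbol_mul_deriv (hg : g.IsSymm) (hdet : IsUnit g.det) (s : R) (i j : ι) :
    ∑ m, christoffelSymbol D g m i j * D m s =
      ∑ a, christoffelFirst D g a i j * gradient D g s a := by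
  simp_rw [← sum_inv_mul_gradient hdet s, ← sum_inv_mul_christoffelSymbol hdet, Finset.mul_sum,
    Finset.sum_mul]
  rw [Finset.sum_comm]
  refine Finset.sum_congr rfl fun a _ => Finset.sum_congr rfl fun m _ => ?_
  rw [hg.inv.apply a m]
  ring

theorem sum_inv_mul_covDeriv_gradient [CharZero K] (hg : g.IsSymm) (hdet : IsUnit g.det) (s : R)
    (b k : ι) : ∑ c, g⁻¹ k c * covDeriv D g (gradient D g s) b c = hessian D g s b k := by
  have hΓ : ∑ c, g⁻¹ k c * ∑ a, christoffelSymbol D g c b a * gradient D g s a =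
      ∑ a, christoffelFirst D g k b a * gradient D g s a := by
    simp_rw [← sum_inv_mul_christoffelSymbol hdet, Finset.mul_sum, Finset.sum_mul]
    rw [Finset.sum_comm]
    simp_rw [mul_assoc]
  have hD : D b (D k s) = ∑ c, g⁻¹ k c * D b (gradient D g s c) +
      ∑ c, gradient D g s c * D b (g⁻¹ k c) := by
    rw [← sum_inv_mul_gradient hdet s k]
    simp [Finset.sum_add_distrib]
  simp_rw [hessian, hD, sum_christoffelSymbol_mul_deriv hg hdet, covDeriv, mul_add,
    Finset.sum_add_distrib, hΓ, deriv_inv hg b k, mul_add, Finset.sum_add_distrib,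
    mul_comm (gradient D g s _)]
  ring

theorem hessian_comm (hD : ∀ i j f, D i (D j f) = D j (D i f)) (hg : g.IsSymm) (s : R) (i j : ι) :
    hessian D g s i j = hessian D g s j i := by
  simp only [hessian, hD i j, christoffelSymbol_comm hg _ i j]

/-- The covariant derivative of the Hamilton–Jacobi equation `s = ½ g(∇s, ∇s)`. -/
theorem deriv_eq_sum_gradient_mul_hessian [CharZero K] (hg : g.IsSymm) (hdet : IsUnit g.det)
    {s : R} (hs : s = (1 / 2 : K) • ∑ i, ∑ j, g i j * D i s * D j s) (k : ι) :
    D k s = ∑ b, gradient D g s b * hessian D g s k b := by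
  have hs' : s = (1 / 2 : K) • ∑ a, gradient D g s a * D a s := by
    rw [Finset.sum_comm] at hs
    simpa only [gradient, Finset.sum_mul, hg.apply] using hs
  have hcov : ∑ a, D a s * covDeriv D g (gradient D g s) k a =
      ∑ b, gradient D g s b * hessian D g s k b := by
    simp_rw [← sum_inv_mul_covDeriv_gradient hg hdet, Finset.mul_sum]
    rw [Finset.sum_comm]
    refine Finset.sum_congr rfl fun a _ => ?_
    rw [← sum_inv_mul_gradient hdet s a, Finset.sum_mul]
    refine Finset.sum_congr rfl fun b _ => ?_
    rw [hg.inv.apply a b]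
    ring
  have hΓ : ∑ a, D a s * ∑ b, christoffelSymbol D g a k b * gradient D g s b =
      ∑ b, gradient D g s b * ∑ a, christoffelSymbol D g a k b * D a s := by
    simp_rw [Finset.mul_sum]
    rw [Finset.sum_comm]
    exact Finset.sum_congr rfl fun b _ => Finset.sum_congr rfl fun a _ => by ring
  have hDk : D k s = (1 / 2 : K) • (∑ a, gradient D g s a * D k (D a s) +
      ∑ a, D a s * D k (gradient D g s a)) := by
    conv_lhs => rw [hs']
    simp [Finset.sum_add_distrib]
  simp_rw [covDeriv, mul_add, Finset.sum_add_distrib, hΓ] at hcov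
  simp_rw [hessian, mul_sub, Finset.sum_sub_distrib] at hcov ⊢
  rw [hDk, eq_sub_of_add_eq hcov]
  module

theorem sum_gradient_mul_covDeriv_gradient [CharZero K] (hD : ∀ i j f, D i (D j f) = D j (D i f))
    (hg : g.IsSymm) (hdet : IsUnit g.det) {s : R}
    (hs : s = (1 / 2 : K) • ∑ i, ∑ j, g i j * D i s * D j s) (c : ι) :
    ∑ b, gradient D g s b * covDeriv D g (gradient D g s) b c = gradient D g s c := by
  have hinj : Function.Injective (g⁻¹ *ᵥ ·) := mulVec_injective_of_isUnit
    ((isUnit_iff_isUnit_det _).2 (isUnit_nonsing_inv_det g hdet))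
  suffices h : (fun c => ∑ b, gradient D g s b * covDeriv D g (gradient D g s) b c) =
      gradient D g s from congrFun h c
  refine hinj (funext fun k => ?_)
  calc ∑ c, g⁻¹ k c * ∑ b, gradient D g s b * covDeriv D g (gradient D g s) b c
    _ = ∑ b, gradient D g s b * ∑ c, g⁻¹ k c * covDeriv D g (gradient D g s) b c := by
      simp_rw [Finset.mul_sum, mul_left_comm (g⁻¹ k _)]
      exact Finset.sum_comm
    _ = ∑ b, gradient D g s b * hessian D g s k b := by
      simp_rw [sum_inv_mul_covDeriv_gradient hg hdet, hessian_comm hD hg s _ k]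
    _ = ∑ c, g⁻¹ k c * gradient D g s c := by
      rw [← deriv_eq_sum_gradient_mul_hessian hg hdet hs, sum_inv_mul_gradient hdet]

section FourthOrderTerms

variable (D g)

/-- The expression `g_{ml} ∂_k Γ^m_{ij}`. -/
def christoffelDeriv (i j k l : ι) : R := ∑ m, g⁻¹ m l * D k (christoffelSymbol D g m i j)

/-- The expression `g_{ml} Γ^p_{ij} Γ^m_{kp}`, with the metric absorbed in the second factor. -/
def christoffelComp (i j k l : ι) : R :=
  ∑ p, christoffelSymbol D g p i j * christoffelFirst D g l k p

/-- The expression `g_{pm} Γ^p_{ij} Γ^m_{kl}`, with the metric absorbed in the second factor. -/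
def christoffelPair (i j k l : ι) : R :=
  ∑ p, christoffelSymbol D g p i j * christoffelFirst D g p k l

/-- The expression
`4 g_{ml} ∂_k Γ^m_{ij} + 4 g_{ml} Γ^p_{ij} Γ^m_{kp} + 3 g_{pm} Γ^p_{ij} Γ^m_{kl}`,
whose symmetrization is the coincidence limit. -/
def fourthOrderTerm (i j k l : ι) : R :=
  4 * christoffelDeriv D g i j k l + 4 * christoffelComp D g i j k l +
    3 * christoffelPair D g i j k l

variable {D g}

theorem sum_christoffelSymbol_mul_deriv_inv [CharZero K] (hg : g.IsSymm) (i j k l : ι) :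
    ∑ m, christoffelSymbol D g m i j * D k (g⁻¹ m l) =
      christoffelComp D g i j k l + christoffelPair D g i j k l := by
  simp_rw [christoffelComp, christoffelPair, ← Finset.sum_add_distrib, ← mul_add]
  exact Finset.sum_congr rfl fun m _ => by rw [deriv_inv hg, add_comm]

theorem deriv_christoffelFirst [CharZero K] (hg : g.IsSymm) (hdet : IsUnit g.det) (i j k l : ι) :
    D k (christoffelFirst D g l i j) =
      christoffelDeriv D g i j k l + christoffelComp D g i j k l + christoffelPair D g i j k l := by
  rw [add_assoc, ← sum_christoffelSymbol_mul_deriv_inv hg, christoffelDeriv,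
    ← sum_inv_mul_christoffelSymbol hdet, ← Finset.sum_add_distrib, map_sum]
  exact Finset.sum_congr rfl fun m _ => by
    rw [hg.inv.apply m l, Derivation.leibniz, smul_eq_mul, smul_eq_mul]

end FourthOrderTerms

end Tensors

section EulerField

variable [DecidableEq ι] (g : Matrix ι ι R) (ev : R →ₐ[K] K)

/-- At the point `ev`, the vector field `V` looks like the radial field `x^i ∂_i` of normal
coordinates: it vanishes there with identity Jacobian, and `V^b ∇_b V^c = V^c`. -/
structure IsEulerField (V : ι → R) : Prop where
  eval_eq_zero : ∀ c, ev (V c) = 0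
  eval_deriv : ∀ i c, ev (D i (V c)) = (1 : Matrix ι ι K) i c
  sum_mul_covDeriv : ∀ c, ∑ b, V b * covDeriv D g V b c = V c

variable {D g ev}

theorem isEulerField_gradient [CharZero K] (hD : ∀ i j f, D i (D j f) = D j (D i f))
    (hg : g.IsSymm) (hdet : IsUnit g.det) {s : R}
    (hs : s = (1 / 2 : K) • ∑ i, ∑ j, g i j * D i s * D j s) (hcrit : ∀ i, ev (D i s) = 0)
    (hhess : IsUnit (of fun i j => ev (D i (D j s))).det) :
    IsEulerField D g ev (gradient D g s) := by
  have hV : ∀ c, ev (gradient D g s c) = 0 := fun c => by simp [gradient, hcrit]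
  have hgeo := sum_gradient_mul_covDeriv_gradient hD hg hdet hs
  let P : Matrix ι ι K := of fun i c => ev (D i (gradient D g s c))
  have hP : P = (of fun i j => ev (D i (D j s))) * g.map ev := by
    ext i c
    simp [P, gradient, hcrit, mul_apply, ← hg.apply c, mul_comm]
  have hunit : IsUnit P := by
    rw [hP, isUnit_iff_isUnit_det, det_mul]
    refine hhess.mul ?_
    simpa [AlgHom.map_det] using hdet.map ev
  have hidem : IsIdempotentElem P := by
    ext i c
    have h := congrArg (fun f => ev (D i f)) (hgeo c)
    simpa [eval_deriv_sum_mul D ev hV, covDeriv, hV, P, mul_apply, mul_comm] using h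
  have hP_one : P = 1 := (IsIdempotentElem.iff_eq_one_of_isUnit hunit).1 hidem
  exact ⟨hV, fun i c => congrFun (congrFun hP_one i) c, hgeo⟩

namespace IsEulerField

variable {V : ι → R} (hV : IsEulerField D g ev V)
include hV

theorem eval_covDeriv (b c : ι) : ev (covDeriv D g V b c) = (1 : Matrix ι ι K) b c := by
  simp [covDeriv, hV.eval_eq_zero, hV.eval_deriv]

theorem eval_deriv_deriv [CharZero K] (hD : ∀ i j f, D i (D j f) = D j (D i f)) (hg : g.IsSymm)
    (i j c : ι) : ev (D i (D j (V c))) = -ev (christoffelSymbol D g c i j) := by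
  have hcov (i b : ι) : ev (D i (covDeriv D g V b c)) =
      ev (D i (D b (V c))) + ev (christoffelSymbol D g c b i) := by
    simp [covDeriv, hV.eval_eq_zero, hV.eval_deriv, one_apply]
  have h := eval_deriv_deriv_sum_mul D ev hV.eval_eq_zero hV.eval_deriv
    (fun b => covDeriv D g V b c) i j
  simp only [hV.sum_mul_covDeriv, hcov, hV.eval_covDeriv, christoffelSymbol_comm hg c j i, hD j i,
    one_apply, mul_ite, mul_one, mul_zero, Finset.sum_ite_eq', Finset.mem_univ, if_true] at h
  linear_combination -(1 / 2 : K) * h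

theorem eval_deriv_covDeriv [CharZero K] (hD : ∀ i j f, D i (D j f) = D j (D i f)) (hg : g.IsSymm)
    (i b c : ι) : ev (D i (covDeriv D g V b c)) = 0 := by
  simp [covDeriv, hV.eval_eq_zero, hV.eval_deriv, hV.eval_deriv_deriv hD hg, one_apply,
    christoffelSymbol_comm hg c b i]

theorem eval_deriv_deriv_covDeriv [CharZero K] (hD : ∀ i j f, D i (D j f) = D j (D i f))
    (hg : g.IsSymm) (i j k c : ι) :
    ev (D i (D j (covDeriv D g V k c))) = ev (D i (D j (D k (V c)))) +
      ev (D i (christoffelSymbol D g c k j)) + ev (D j (christoffelSymbol D g c k i)) -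
      ∑ p, ev (christoffelSymbol D g p i j) * ev (christoffelSymbol D g c k p) := by
  simp only [covDeriv, mul_comm (christoffelSymbol _ _ _ _ _) (V _), map_add,
    eval_deriv_deriv_sum_mul D ev hV.eval_eq_zero hV.eval_deriv, hV.eval_deriv_deriv hD hg,
    neg_mul, Finset.sum_neg_distrib]
  ring

theorem eval_deriv_deriv_deriv [CharZero K] (hD : ∀ i j f, D i (D j f) = D j (D i f))
    (hg : g.IsSymm) (i j k c : ι) :
    3 * ev (D i (D j (D k (V c)))) = cyclicSum (fun i j k =>
      ∑ p, ev (christoffelSymbol D g p i j) * ev (christoffelSymbol D g c k p) -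
        2 * ev (D k (christoffelSymbol D g c i j))) i j k := by
  have h := eval_deriv_deriv_deriv_sum_mul D ev hD hV.eval_eq_zero hV.eval_deriv
    (fun b => covDeriv D g V b c) i j k
  have hjki : D j (D k (D i (V c))) = D i (D j (D k (V c))) := by rw [hD k i, hD j i]
  have hkij : D k (D i (D j (V c))) = D i (D j (D k (V c))) := by rw [hD k i, hD k j]
  simp only [hV.sum_mul_covDeriv, hV.eval_covDeriv, hV.eval_deriv_covDeriv hD hg,
    hV.eval_deriv_deriv_covDeriv hD hg, cyclicSum, hjki, hkij, christoffelSymbol_comm hg c k j,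
    christoffelSymbol_comm hg c i k, christoffelSymbol_comm hg c j i, one_apply, mul_ite, mul_one,
    mul_zero, Finset.sum_ite_eq', Finset.sum_const_zero, Finset.mem_univ, if_true] at h
  rw [cyclicSum]
  linear_combination -h

theorem eval_deriv_deriv_deriv_sum_mul_inv [CharZero K] (hD : ∀ i j f, D i (D j f) = D j (D i f))
    (hg : g.IsSymm) (hdet : IsUnit g.det) (i j k l : ι) :
    3 * ev (D i (D j (D k (∑ c, g⁻¹ l c * V c)))) = cyclicSum (fun i j k =>
      ev (fourthOrderTerm D g i j k l) +
        3 * (ev (D i (D j (g⁻¹ k l))) - 2 * ev (D k (christoffelFirst D g l i j)))) i j k := by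
  have hlow (i j k : ι) : ∑ c, (∑ p, ev (christoffelSymbol D g p i j) *
        ev (christoffelSymbol D g c k p) - 2 * ev (D k (christoffelSymbol D g c i j))) *
          ev (g⁻¹ c l) =
      ev (christoffelComp D g i j k l) - 2 * ev (christoffelDeriv D g i j k l) := by
    simp only [christoffelComp, christoffelDeriv, ← sum_inv_mul_christoffelSymbol hdet, map_sum,
      map_mul, sub_mul, Finset.sum_sub_distrib, Finset.mul_sum, Finset.sum_mul]
    rw [Finset.sum_comm]
    congr 1 <;> simp only [hg.inv.apply l, mul_comm, mul_left_comm]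
  have hinv (i j k : ι) : ∑ c, ev (D i (D j (V c))) * ev (D k (g⁻¹ c l)) =
      -(ev (christoffelComp D g i j k l) + ev (christoffelPair D g i j k l)) := by
    simp only [hV.eval_deriv_deriv hD hg, neg_mul, Finset.sum_neg_distrib, ← map_mul, ← map_sum,
      sum_christoffelSymbol_mul_deriv_inv hg, map_add]
  have hcomm : ∑ c, g⁻¹ l c * V c = ∑ c, V c * g⁻¹ c l := by
    simp only [hg.inv.apply _ l, mul_comm]
  simp only [hcomm, eval_deriv_deriv_deriv_sum_mul D ev hD hV.eval_eq_zero hV.eval_deriv, mul_add,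
    Finset.mul_sum, ← mul_assoc, hV.eval_deriv_deriv_deriv hD hg, cyclicSum, hinv, add_mul,
    Finset.sum_add_distrib, hlow, fourthOrderTerm, deriv_christoffelFirst hg hdet, map_add, map_mul,
    map_ofNat]
  ring

end IsEulerField

theorem symmetrize_eval_deriv_deriv_inv [CharZero K] (hg : g.IsSymm) :
    symmetrize (fun y : Fin 4 → ι => ev (D (y 0) (D (y 1) (g⁻¹ (y 2) (y 3))))) =
      (2 : K) • symmetrize fun y => ev (D (y 2) (christoffelFirst D g (y 3) (y 0) (y 1))) := by
  let F : (Fin 4 → ι) → K := fun y => ev (D (y 2) (christoffelFirst D g (y 3) (y 0) (y 1)))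
  have hderiv : (fun y : Fin 4 → ι => ev (D (y 0) (D (y 1) (g⁻¹ (y 2) (y 3))))) =
      (fun y => F (y ∘ ![1, 3, 0, 2])) + fun y => F (y ∘ ![1, 2, 0, 3]) := by
    ext y
    simp [F, deriv_inv hg]
  rw [hderiv, map_add, symmetrize_comp_of_injective F (by decide),
    symmetrize_comp_of_injective F (by decide), two_smul]

theorem eval_deriv_deriv_deriv_deriv [CharZero K] (hD : ∀ i j f, D i (D j f) = D j (D i f))
    (hg : g.IsSymm) (hdet : IsUnit g.det) {s : R}
    (hs : s = (1 / 2 : K) • ∑ i, ∑ j, g i j * D i s * D j s) (hcrit : ∀ i, ev (D i s) = 0)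
    (hhess : IsUnit (of fun i j => ev (D i (D j s))).det) (y : Fin 4 → ι) :
    ev (D (y 0) (D (y 1) (D (y 2) (D (y 3) s)))) =
      symmetrize (fun y => ev (fourthOrderTerm D g (y 0) (y 1) (y 2) (y 3))) y := by
  have hV := isEulerField_gradient hD hg hdet hs hcrit hhess
  let E (y : Fin 4 → ι) : K := ev (D (y 0) (D (y 1) (D (y 2) (D (y 3) s))))
  let F (y : Fin 4 → ι) : K := ev (fourthOrderTerm D g (y 0) (y 1) (y 2) (y 3))
  let G (y : Fin 4 → ι) : K := ev (D (y 0) (D (y 1) (g⁻¹ (y 2) (y 3))))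
  let H (y : Fin 4 → ι) : K := ev (D (y 2) (christoffelFirst D g (y 3) (y 0) (y 1)))
  have hE : symmetrize E = E := by
    have : LeftCommutative fun i f => D i f := ⟨hD⟩
    exact symmetrize_foldr_ofFn (m := 4) (fun i f => D i f) ev s
  have hGH : symmetrize G = (2 : K) • symmetrize H := symmetrize_eval_deriv_deriv_inv hg
  have hcyc := symmetrize_cyclicSum fun i j k l => ev (fourthOrderTerm D g i j k l) +
    3 * (ev (D i (D j (g⁻¹ k l))) - 2 * ev (D k (christoffelFirst D g l i j)))
  simp only [← hV.eval_deriv_deriv_deriv_sum_mul_inv hD hg hdet, sum_inv_mul_gradient hdet] at hcyc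
  have hEF : (3 : K) • E = (3 : K) • symmetrize F :=
    calc (3 : K) • E = symmetrize ((3 : K) • E) := by rw [map_smul, hE]
      _ = (3 : K) • symmetrize (F + (3 : K) • (G - (2 : K) • H)) := hcyc
      _ = (3 : K) • symmetrize F := by
        rw [map_add, map_smul, map_sub, map_smul, hGH, sub_self, smul_zero, add_zero]
  exact congrFun (smul_right_injective _ three_ne_zero hEF) y

end EulerField

end AlgebraicMetric

/-! ### The algebra of smooth functions on an open set -/

section SmoothFunctions

open TopologicalSpace
open scoped ContDiff

variable {𝕜 E : Type*} [NontriviallyNormedField 𝕜] [NormedAddCommGroup E] [NormedSpace 𝕜 E]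

variable (𝕜) in
/-- The algebra of smooth scalar functions on an open set `U`. A function on the subtype `U` counts
as smooth if its extension by zero is smooth on `U`; this gives every element a canonical function
on the whole space to differentiate. -/
def smoothSubalgebra (U : Opens E) : Subalgebra 𝕜 (U → 𝕜) where
  carrier := {f | ContDiffOn 𝕜 ∞ (Function.extend Subtype.val f 0) U}
  mul_mem' hf hh := (ContDiffOn.mul hf hh).congr fun x hx => by
    lift x to U using hx
    simp
  add_mem' hf hh := (ContDiffOn.add hf hh).congr fun x hx => by
    lift x to U using hx
    simp
  algebraMap_mem' c := (contDiffOn_const (c := c)).congr fun x hx =>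
    Subtype.val_injective.extend_apply _ _ (⟨x, hx⟩ : U)

namespace smoothSubalgebra

variable {U : Opens E}

/-- The extension of a smooth function on `U` by zero. -/
def extension (f : smoothSubalgebra 𝕜 U) : E → 𝕜 := Function.extend Subtype.val f.1 0

/-- The restriction to `U` of a function smooth on `U`. -/
def restrict (F : E → 𝕜) (hF : ContDiffOn 𝕜 ∞ F U) : smoothSubalgebra 𝕜 U :=
  ⟨fun x => F x, hF.congr fun x hx => Subtype.val_injective.extend_apply _ _ (⟨x, hx⟩ : U)⟩

/-- Evaluation of smooth functions at a point of `U`. -/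
def evalAt (x : U) : smoothSubalgebra 𝕜 U →ₐ[𝕜] 𝕜 :=
  (Pi.evalAlgHom 𝕜 (fun _ => 𝕜) x).comp (smoothSubalgebra 𝕜 U).val

@[ext]
theorem ext {f h : smoothSubalgebra 𝕜 U} (hfh : ∀ x, evalAt x f = evalAt x h) : f = h :=
  Subtype.ext (funext hfh)

@[simp]
theorem evalAt_restrict (F : E → 𝕜) (hF : ContDiffOn 𝕜 ∞ F U) (x : U) :
    evalAt x (restrict F hF) = F x := rfl

theorem extension_apply (f : smoothSubalgebra 𝕜 U) (x : U) : extension f x = evalAt x f :=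
  Subtype.val_injective.extend_apply _ _ x

theorem contDiffOn_extension (f : smoothSubalgebra 𝕜 U) : ContDiffOn 𝕜 ∞ (extension f) U := f.2

theorem differentiableAt_extension (f : smoothSubalgebra 𝕜 U) (x : U) :
    DifferentiableAt 𝕜 (extension f) x :=
  ((contDiffOn_extension f).contDiffAt (U.isOpen.mem_nhds x.2)).differentiableAt (by simp)

theorem fderiv_extension {f : smoothSubalgebra 𝕜 U} {F : E → 𝕜} (h : ∀ x : U, evalAt x f = F x)
    (x : U) : fderiv 𝕜 (extension f) x = fderiv 𝕜 F x :=
  Filter.EventuallyEq.fderiv_eq <| Filter.eventuallyEq_of_mem (U.isOpen.mem_nhds x.2) fun y hy =>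
    (extension_apply f ⟨y, hy⟩).trans (h ⟨y, hy⟩)

variable (𝕜 U) in
/-- The directional derivative `f ↦ (x ↦ Df(x) v)` as a derivation. -/
def dirDeriv (v : E) : Derivation 𝕜 (smoothSubalgebra 𝕜 U) (smoothSubalgebra 𝕜 U) :=
  Derivation.mk'
    { toFun f := restrict (fun x => fderiv 𝕜 (extension f) x v)
        (((contDiffOn_extension f).fderiv_of_isOpen U.isOpen (m := ∞) (by simp)).clm_apply
          contDiffOn_const)
      map_add' f h := by
        ext x
        rw [evalAt_restrict, fderiv_extension (F := extension f + extension h)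
          fun y => by simp [extension_apply]]
        simp [fderiv_add (differentiableAt_extension f x) (differentiableAt_extension h x)]
      map_smul' c f := by
        ext x
        rw [evalAt_restrict, fderiv_extension (F := c • extension f)
          fun y => by simp [extension_apply]]
        simp [fderiv_const_smul (differentiableAt_extension f x)] }
    fun f h => by
      ext x
      change fderiv 𝕜 (extension (f * h)) x v = _
      rw [fderiv_extension (F := extension f * extension h) fun y => by simp [extension_apply],
        fderiv_mul (differentiableAt_extension f x) (differentiableAt_extension h x)]
      simp [extension_apply]

theorem evalAt_dirDeriv {f : smoothSubalgebra 𝕜 U} {F : E → 𝕜} (h : ∀ x : U, evalAt x f = F x)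
    (v : E) (x : U) : evalAt x (dirDeriv 𝕜 U v f) = fderiv 𝕜 F x v :=
  congrArg (· v) (fderiv_extension h x)

theorem dirDeriv_comm [IsRCLikeNormedField 𝕜] (v w : E) (f : smoothSubalgebra 𝕜 U) :
    dirDeriv 𝕜 U v (dirDeriv 𝕜 U w f) = dirDeriv 𝕜 U w (dirDeriv 𝕜 U v f) := by
  ext x
  have hf : ContDiffAt 𝕜 ∞ (extension f) x :=
    (contDiffOn_extension f).contDiffAt (U.isOpen.mem_nhds x.2)
  have hdiff : DifferentiableAt 𝕜 (fderiv 𝕜 (extension f)) x :=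
    (hf.fderiv_right (m := ∞) (by simp)).differentiableAt (by simp)
  have hsecond (v w : E) : evalAt x (dirDeriv 𝕜 U v (dirDeriv 𝕜 U w f)) =
      fderiv 𝕜 (fderiv 𝕜 (extension f)) x v w := by
    rw [evalAt_dirDeriv (F := fun y => fderiv 𝕜 (extension f) y w) fun y => rfl,
      fderiv_clm_apply hdiff (differentiableAt_const w)]
    simp
  have hn : minSmoothness 𝕜 2 ≤ ∞ :=
    minSmoothness_of_isRCLikeNormedField.trans_le (WithTop.coe_le_coe.2 (le_top (a := 2)))
  rw [hsecond, hsecond]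
  exact hf.isSymmSndFDerivAt hn v w

theorem isUnit_of_evalAt_ne_zero {f : smoothSubalgebra 𝕜 U} (hf : ∀ x, evalAt x f ≠ 0) :
    IsUnit f := by
  have hinv : ContDiffOn 𝕜 ∞ (fun x => (extension f x)⁻¹) U :=
    (contDiffOn_extension f).inv fun x hx => (extension_apply f ⟨x, hx⟩).trans_ne (hf ⟨x, hx⟩)
  refine IsUnit.of_mul_eq_one (restrict _ hinv) ?_
  ext x
  simp [extension_apply, hf x]

end smoothSubalgebra

end SmoothFunctions

/-! ### Coordinate expressions -/

section CoordinateExpressions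

open TopologicalSpace AlgebraicMetric smoothSubalgebra

variable {n : ℕ} {U : Opens (Fin n → ℝ)}

variable (U) in
/-- The partial derivative `∂_i` as a derivation of the algebra of smooth functions. -/
abbrev coordDeriv (i : Fin n) : Derivation ℝ (smoothSubalgebra ℝ U) (smoothSubalgebra ℝ U) :=
  dirDeriv ℝ U (Pi.single i 1)

theorem evalAt_coordDeriv {f : smoothSubalgebra ℝ U} {F : (Fin n → ℝ) → ℝ}
    (h : ∀ x : U, evalAt x f = F x) (i : Fin n) (x : U) :
    evalAt x (coordDeriv U i f) = pd n i F x :=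
  evalAt_dirDeriv h _ _

variable {g : Fin n → Fin n → (Fin n → ℝ) → ℝ} (hg : ∀ i j, ContDiffOn ℝ (⊤ : ℕ∞) (g i j) U)

/-- The matrix `(g^{ij})` with entries in the algebra of smooth functions. -/
def metricMatrix : Matrix (Fin n) (Fin n) (smoothSubalgebra ℝ U) :=
  Matrix.of fun i j => restrict (g i j) (hg i j)

@[simp]
theorem evalAt_metricMatrix (x : U) (i j : Fin n) :
    evalAt x (metricMatrix hg i j) = g i j x := rfl

theorem map_evalAt_metricMatrix (x : U) : (metricMatrix hg).map (evalAt x) = gMat n g x := rfl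

theorem isSymm_metricMatrix (hgsymm : ∀ i j, ∀ x ∈ U, g i j x = g j i x) :
    (metricMatrix hg).IsSymm := by
  ext i j x
  exact hgsymm j i x x.2

theorem isUnit_det_metricMatrix (hginv : ∀ x ∈ U, IsUnit (gMat n g x).det) :
    IsUnit (metricMatrix hg).det :=
  isUnit_of_evalAt_ne_zero fun x => by
    rw [AlgHom.map_det]
    exact (hginv x x.2).ne_zero

variable {hg} (hdet : IsUnit (metricMatrix hg).det)
include hdet

theorem evalAt_metricMatrix_inv (x : U) (i j : Fin n) :
    evalAt x ((metricMatrix hg)⁻¹ i j) = gLow n g x i j := by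
  have h : (metricMatrix hg)⁻¹.map (evalAt x) * gMat n g x = 1 := by
    rw [← map_evalAt_metricMatrix hg, ← Matrix.map_mul, Matrix.nonsing_inv_mul _ hdet,
      Matrix.map_one _ (map_zero _) (map_one _)]
  rw [gLow, Matrix.inv_eq_left_inv h, Matrix.map_apply]

theorem evalAt_christoffelSymbol (x : U) (m i j : Fin n) :
    evalAt x (christoffelSymbol (coordDeriv U) (metricMatrix hg) m i j) =
      christoffel n g m i j x := by
  have hderiv (i j k : Fin n) : evalAt x (coordDeriv U i ((metricMatrix hg)⁻¹ j k)) =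
      pd n i (fun y => gLow n g y j k) x :=
    evalAt_coordDeriv (fun y => evalAt_metricMatrix_inv hdet y j k) i x
  simp only [christoffelSymbol, christoffelFirst, christoffel, map_sum, map_mul, map_smul, map_add,
    map_sub, hderiv, Finset.mul_sum, smul_eq_mul]
  exact Finset.sum_congr rfl fun k _ => mul_left_comm _ _ _

theorem evalAt_fourthOrderTerm (hsymm : (metricMatrix hg).IsSymm) (x : U) (i j k l : Fin n) :
    evalAt x (fourthOrderTerm (coordDeriv U) (metricMatrix hg) i j k l) =
      sigma4Term n g x i j k l := by
  have hderiv (m i j k : Fin n) : evalAt x (coordDeriv U k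
      (christoffelSymbol (coordDeriv U) (metricMatrix hg) m i j)) =
        pd n k (christoffel n g m i j) x :=
    evalAt_coordDeriv (fun y => evalAt_christoffelSymbol hdet y m i j) k x
  have hlow (i j : Fin n) : gLow n g x i j = gLow n g x j i := by
    simp only [← evalAt_metricMatrix_inv hdet, hsymm.inv.apply i j]
  simp only [fourthOrderTerm, christoffelDeriv, christoffelComp, christoffelPair,
    ← sum_inv_mul_christoffelSymbol hdet, map_add, map_mul, map_sum, map_ofNat, hderiv,
    evalAt_christoffelSymbol hdet, evalAt_metricMatrix_inv hdet, sigma4Term, Finset.mul_sum]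
  congr 1
  · congr 1
    rw [Finset.sum_comm]
    exact Finset.sum_congr rfl fun m _ => Finset.sum_congr rfl fun p _ => by rw [hlow l m]; ring
  · rw [Finset.sum_comm]
    exact Finset.sum_congr rfl fun m _ => Finset.sum_congr rfl fun p _ => by ring

end CoordinateExpressions

end

theorem ruseSynge_fourth_coincidence_general (n : ℕ) (U : Set (Fin n → ℝ)) (hU : IsOpen U)
    (g : Fin n → Fin n → (Fin n → ℝ) → ℝ)
    (hgsmooth : ∀ i j, ContDiffOn ℝ (⊤ : ℕ∞) (g i j) U)
    (hgsymm : ∀ i j, ∀ x ∈ U, g i j x = g j i x)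
    (hginv : ∀ x ∈ U, IsUnit (gMat n g x).det)
    (s : (Fin n → ℝ) → ℝ) (hs : ContDiffOn ℝ (⊤ : ℕ∞) s U)
    (hHJ : ∀ x ∈ U, s x = (1 / 2) * ∑ i, ∑ j, g i j x * pd n i s x * pd n j s x)
    (x₀ : Fin n → ℝ) (hx₀ : x₀ ∈ U) (hcrit : ∀ i, pd n i s x₀ = 0)
    (hhess : IsUnit (Matrix.of fun i j => pd n i (pd n j s) x₀ : Matrix (Fin n) (Fin n) ℝ).det)
    (i j k l : Fin n) :
    pd n i (pd n j (pd n k (pd n l s))) x₀ =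
      (1 / 24) * ∑ τ : Equiv.Perm (Fin 4),
        sigma4Term n g x₀ (![i, j, k, l] (τ 0)) (![i, j, k, l] (τ 1))
          (![i, j, k, l] (τ 2)) (![i, j, k, l] (τ 3)) := by
  lift U to TopologicalSpace.Opens (Fin n → ℝ) using hU
  let x : U := ⟨x₀, hx₀⟩
  let s' := smoothSubalgebra.restrict s hs
  have hdet := isUnit_det_metricMatrix hgsmooth hginv
  have hd1 (i : Fin n) (y : U) : smoothSubalgebra.evalAt y (coordDeriv U i s') = pd n i s y :=
    evalAt_coordDeriv (fun _ => rfl) i y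
  have hd2 (i j : Fin n) (y : U) := evalAt_coordDeriv (hd1 j) i y
  have hd3 (i j k : Fin n) (y : U) := evalAt_coordDeriv (hd2 j k) i y
  have hd4 (i j k l : Fin n) (y : U) := evalAt_coordDeriv (hd3 j k l) i y
  have hs' : s' = (1 / 2 : ℝ) • ∑ i, ∑ j, metricMatrix hgsmooth i j * coordDeriv U i s' *
      coordDeriv U j s' := by
    ext y
    simpa [hd1, s'] using hHJ y y.2
  have hsymm := isSymm_metricMatrix hgsmooth hgsymm
  have h := AlgebraicMetric.eval_deriv_deriv_deriv_deriv (ev := smoothSubalgebra.evalAt x)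
    (fun i j => smoothSubalgebra.dirDeriv_comm _ _) hsymm hdet hs'
    (fun i => (hd1 i x).trans (hcrit i)) (by simpa only [hd2] using hhess) ![i, j, k, l]
  simpa [hd4, symmetrize_apply, evalAt_fourthOrderTerm hdet hsymm, Nat.factorial, x] using h

/-- Coincidence limit of the fourth partial derivatives of the Ruse–Synge function in the
first argument:
`[σ_{,ijkl}](x') = 4 g_{m(l} Γ^m_{ij,k)} + 4 g_{m(l} Γ^n_{ij} Γ^m_{k)n}
  + 3 g_{nm} Γ^n_{(ij} Γ^m_{kl)}`,
with round brackets denoting the average over all 24 permutations of `(i,j,k,l)`. -/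
theorem ruseSynge_fourth_coincidence (n : ℕ) (hn : 1 ≤ n)
    (U : Set (Fin n → ℝ)) (hU : IsOpen U)
    (g : Fin n → Fin n → (Fin n → ℝ) → ℝ)
    (hgsmooth : ∀ i j, ContDiffOn ℝ (⊤ : ℕ∞) (g i j) U)
    (hgsymm : ∀ i j, ∀ x ∈ U, g i j x = g j i x)
    (hginv : ∀ x ∈ U, IsUnit (gMat n g x).det)
    (σ : (Fin n → ℝ) → (Fin n → ℝ) → ℝ)
    (hσ : ContDiffOn ℝ (⊤ : ℕ∞) (fun p : (Fin n → ℝ) × (Fin n → ℝ) => σ p.1 p.2) (U ×ˢ U))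
    (hσsymm : ∀ x ∈ U, ∀ x' ∈ U, σ x x' = σ x' x)
    (hHJ : ∀ x ∈ U, ∀ x' ∈ U,
      σ x x' = (1 / 2) * ∑ i, ∑ j, g i j x * d1 n i σ x x' * d1 n j σ x x')
    (hdiag0 : ∀ x ∈ U, σ x x = 0)
    (hdiag1 : ∀ x ∈ U, ∀ i : Fin n, d1 n i σ x x = 0)
    (hhess : ∀ x ∈ U, IsUnit (Matrix.of fun i j => d1 n i (d1 n j σ) x x :
      Matrix (Fin n) (Fin n) ℝ).det)
    (x' : Fin n → ℝ) (hx' : x' ∈ U) :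
    ∀ i j k l : Fin n,
      d1 n i (d1 n j (d1 n k (d1 n l σ))) x' x' =
        (1 / 24) * ∑ τ : Equiv.Perm (Fin 4),
          sigma4Term n g x' (![i, j, k, l] (τ 0)) (![i, j, k, l] (τ 1))
            (![i, j, k, l] (τ 2)) (![i, j, k, l] (τ 3)) :=
  ruseSynge_fourth_coincidence_general n U hU g hgsmooth hgsymm hginv (σ · x')
    (hσ.comp (contDiffOn_id.prodMk contDiffOn_const) fun _ hx => ⟨hx, hx'⟩)
    (fun x hx => hHJ x hx x' hx') x' hx' (hdiag1 x' hx') (hhess x' hx')
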